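/- Radó's theorem in several variables: let U be an open subset of ℂⁿ and let g : ℂⁿ → ℂ be continuous on U and holomorphic (complex differentiable) at every point of U \ g⁻¹({0}). Then g is holomorphic on all of U. -/

import Mathlib

open Complex Metric Set Filter Topology

def radoDom (f : ℂ → ℂ) (R : ℝ) : Set ℂ := ball 0 R ∩ {z | f z ≠ 0}

lemma radoDom_isOpen {f : ℂ → ℂ} {R : ℝ} (hf : ContinuousOn f (closedBall 0 R)) :
    IsOpen (radoDom f R) :=
  (hf.mono ball_subset_closedBall).isOpen_inter_preimage isOpen_ball
    (isOpen_compl_singleton (x := (0:ℂ)))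

lemma radoDom_closure {f : ℂ → ℂ} {R : ℝ} : closure (radoDom f R) ⊆ closedBall 0 R :=
  closure_minimal (inter_subset_left.trans ball_subset_closedBall) isClosed_closedBall

lemma rado_max {f h : ℂ → ℂ} {R M : ℝ} (hf : ContinuousOn f (closedBall 0 R))
    (hd : ∀ z ∈ ball (0:ℂ) R, f z ≠ 0 → DifferentiableAt ℂ f z)
    (hh : DiffContOnCl ℂ h (radoDom f R)) (hM : 0 < M)
    (hb : ∀ z ∈ sphere (0:ℂ) R, z ∈ closure (radoDom f R) → ‖h z‖ ≤ M) :
    ∀ z ∈ radoDom f R, ‖h z‖ ≤ M := by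
  intro z hz
  obtain ⟨K, hK⟩ := (isCompact_closedBall (0:ℂ) R).exists_bound_of_continuousOn hf
  have hfc : DiffContOnCl ℂ f (radoDom f R) :=
    ⟨fun w hw => (hd w hw.1 hw.2).differentiableWithinAt, hf.mono radoDom_closure⟩
  have hbd : Bornology.IsBounded (radoDom f R) := isBounded_ball.subset inter_subset_left
  have key : ∀ n : ℕ, ‖h z‖ ^ n * ‖f z‖ ≤ M ^ n * K := by
    intro n
    have hp : DiffContOnCl ℂ (fun w => h w ^ n * f w) (radoDom f R) :=
      ⟨(hh.differentiableOn.pow n).mul hfc.differentiableOn,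
        (hh.continuousOn.pow n).mul hfc.continuousOn⟩
    have := Complex.norm_le_of_forall_mem_frontier_norm_le hbd hp (C := M ^ n * K) ?_
      (subset_closure hz)
    · simpa using this
    · intro w hw
      have hwc := frontier_subset_closure hw
      have hwb := radoDom_closure hwc
      have hK0 : 0 ≤ K := (norm_nonneg _).trans (hK w hwb)
      by_cases hfw : f w = 0
      · simp [hfw]; positivity
      have hws : w ∈ sphere (0:ℂ) R := by
        by_contra hns
        have hb' : w ∈ ball (0:ℂ) R := by
          rw [mem_ball]; exact lt_of_le_of_ne (mem_closedBall.1 hwb) (fun e => hns (mem_sphere.2 e))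
        rw [(radoDom_isOpen hf).frontier_eq] at hw
        exact hw.2 ⟨hb', hfw⟩
      rw [norm_mul, norm_pow]
      have := hb w hws hwc
      have := hK w hwb
      gcongr
  have hfz : 0 < ‖f z‖ := norm_pos_iff.2 hz.2
  by_contra hcon
  push Not at hcon
  have h1 : 1 < ‖h z‖ / M := by rwa [one_lt_div hM]
  obtain ⟨n, hn⟩ := ((tendsto_pow_atTop_atTop_of_one_lt h1).eventually_gt_atTop (K / ‖f z‖)).exists
  have := key n
  rw [div_pow, div_lt_div_iff₀ hfz (by positivity)] at hn
  linarith

lemma rado_max_re {f h : ℂ → ℂ} {R M : ℝ} (hf : ContinuousOn f (closedBall 0 R))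
    (hd : ∀ z ∈ ball (0:ℂ) R, f z ≠ 0 → DifferentiableAt ℂ f z)
    (hh : DiffContOnCl ℂ h (radoDom f R))
    (hb : ∀ z ∈ sphere (0:ℂ) R, (h z).re ≤ M) :
    ∀ z ∈ radoDom f R, (h z).re ≤ M := by
  intro z hz
  have := rado_max (h := fun w => Complex.exp (h w)) (M := Real.exp M) hf hd
    ⟨hh.differentiableOn.cexp, hh.continuousOn.cexp⟩ (Real.exp_pos _) ?_ z hz
  · simpa [Complex.norm_exp] using this
  · intro w hw _
    simpa [Complex.norm_exp] using hb w hw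

lemma rado_dense {f : ℂ → ℂ} {R : ℝ} (hR : 0 < R) (hf : ContinuousOn f (closedBall 0 R))
    (hd : ∀ z ∈ ball (0:ℂ) R, f z ≠ 0 → DifferentiableAt ℂ f z)
    (h0 : (0:ℂ) ∈ closure (radoDom f R)) :
    ball (0:ℂ) (R/2) ⊆ closure (radoDom f R) := by
  intro b hb
  by_contra hbc
  have hbn : ‖b‖ < R / 2 := by simpa using hb
  have hne : ∀ w ∈ closure (radoDom f R), w - b ≠ 0 := fun w hw e =>
    hbc (by rwa [sub_eq_zero.1 e] at hw)
  have hco : ContinuousOn (fun w : ℂ => (w - b)⁻¹) (closure (radoDom f R)) :=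
    ContinuousOn.inv₀ (by fun_prop) hne
  have := rado_max (h := fun w => (w - b)⁻¹) (M := (R/2)⁻¹) hf hd
    ⟨DifferentiableOn.inv (by fun_prop) (fun w hw => hne w (subset_closure hw)), hco⟩
    (by positivity) ?_
  · have h2 : ∀ z ∈ closure (radoDom f R), ‖(z - b)⁻¹‖ ≤ (R/2)⁻¹ := fun z hz =>
      le_on_closure this hco.norm continuousOn_const hz
    have h3 := h2 0 h0
    have hb0 : 0 < ‖b‖ := by
      have := hne 0 h0
      simpa using this
    rw [norm_inv, inv_le_inv₀ (by simpa using hb0) (by positivity)] at h3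
    simp at h3
    linarith
  · intro z hz _
    have hz' : ‖z‖ = R := by simpa using hz
    have : R / 2 ≤ ‖z - b‖ := by
      have := norm_sub_norm_le z b
      linarith
    rw [norm_inv]
    gcongr

open ComplexConjugate in
lemma approx_re {u : ℂ → ℝ} {R : ℝ} (hR : 0 < R) (hu : ContinuousOn u (sphere (0:ℂ) R))
    {ε : ℝ} (hε : 0 < ε) :
    ∃ p : ℂ → ℂ, Differentiable ℂ p ∧ ∀ z ∈ sphere (0:ℂ) R, |u z - (p z).re| ≤ ε := by
  let T : ℝ := 2 * Real.pi
  have : Fact (0 < T) := ⟨by positivity⟩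
  have hmem : ∀ x : AddCircle T, (R : ℂ) * (AddCircle.toCircle x : ℂ) ∈ sphere (0:ℂ) R := by
    intro x
    rw [mem_sphere_zero_iff_norm, norm_mul, Circle.norm_coe, mul_one, norm_real, Real.norm_of_nonneg hR.le]
  let φ : C(AddCircle T, ℂ) := ⟨fun x => (u (R * (AddCircle.toCircle x : ℂ)) : ℂ), by
    refine continuous_ofReal.comp (hu.comp_continuous ?_ hmem)
    exact continuous_const.mul (continuous_induced_dom.comp AddCircle.continuous_toCircle)⟩
  let S : Submodule ℂ C(AddCircle T, ℂ) :=
    { carrier := {ψ | ∃ p q : ℂ → ℂ, Differentiable ℂ p ∧ Differentiable ℂ q ∧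
        ∀ x, ψ x = p (AddCircle.toCircle x) + conj (q (AddCircle.toCircle x))}
      zero_mem' := ⟨0, 0, differentiable_const _, differentiable_const _, by simp⟩
      add_mem' := by
        rintro a b ⟨p, q, hp, hq, h⟩ ⟨p', q', hp', hq', h'⟩
        refine ⟨p + p', q + q', hp.add hp', hq.add hq', fun x => ?_⟩
        simp [h, h']; ring
      smul_mem' := by
        rintro c a ⟨p, q, hp, hq, h⟩
        refine ⟨c • p, conj c • q, hp.const_smul _, hq.const_smul _, fun x => ?_⟩
        simp [h]; ring }
  have hS : Submodule.span ℂ (range <| @fourier T) ≤ S := by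
    rw [Submodule.span_le]
    rintro _ ⟨n, rfl⟩
    obtain ⟨m, rfl | rfl⟩ := n.eq_nat_or_neg
    · refine ⟨fun z => z ^ m, 0, by fun_prop, differentiable_const _, fun x => ?_⟩
      simp [fourier_apply, AddCircle.toCircle_nsmul]
    · refine ⟨0, fun z => z ^ m, differentiable_const _, by fun_prop, fun x => ?_⟩
      rw [fourier_neg]
      simp [fourier_apply, AddCircle.toCircle_nsmul]
  have hφ : φ ∈ (Submodule.span ℂ (range <| @fourier T)).topologicalClosure := by
    rw [span_fourier_closure_eq_top]; trivial
  obtain ⟨ψ, hψ, hd⟩ := Metric.mem_closure_iff.1 (show φ ∈ closure (Submodule.span ℂ (range <| @fourier T) : Set C(AddCircle T, ℂ)) from hφ) ε hε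
  obtain ⟨p, q, hp, hq, hpq⟩ := hS hψ
  refine ⟨fun z => p (z / R) + q (z / R), by fun_prop, fun z hz => ?_⟩
  have hzn : ‖z‖ = R := by simpa using hz
  have hRc : (R : ℂ) ≠ 0 := by exact_mod_cast hR.ne'
  obtain ⟨x, hx⟩ : ∃ x : AddCircle T, (AddCircle.toCircle x : ℂ) = z / R := by
    refine ⟨((arg z : ℝ) : AddCircle T), ?_⟩
    rw [AddCircle.toCircle_apply_mk]
    have := Complex.norm_mul_exp_arg_mul_I z
    rw [hzn] at this
    rw [eq_div_iff hRc, mul_comm]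
    have hT : 2 * Real.pi / T = 1 := div_self (by positivity)
    rw [hT]
    simpa using this
  have h1 := (ContinuousMap.dist_apply_le_dist (f := φ) (g := ψ) x).trans hd.le
  rw [dist_eq_norm, hpq x, hx] at h1
  have h2 : φ x = (u z : ℂ) := by
    show ((u (R * (AddCircle.toCircle x : ℂ)) : ℝ) : ℂ) = _
    rw [hx, mul_div_cancel₀ _ hRc]
  rw [h2] at h1
  refine le_trans ?_ h1
  refine le_trans (le_of_eq ?_) (abs_re_le_norm _)
  simp

lemma rado_re {f : ℂ → ℂ} {R : ℝ} (hR : 0 < R) (hf : ContinuousOn f (closedBall 0 R))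
    (hd : ∀ z ∈ ball (0:ℂ) R, f z ≠ 0 → DifferentiableAt ℂ f z) :
    ∃ P : ℂ → ℂ, DifferentiableOn ℂ P (ball 0 R) ∧ ∀ z ∈ radoDom f R, (f z).re = (P z).re := by
  have hus : ContinuousOn (fun z => (f z).re) (sphere (0:ℂ) R) :=
    continuous_re.comp_continuousOn (hf.mono sphere_subset_closedBall)
  have hcirc : CircleIntegrable (fun z => (f z).re) 0 R := hus.circleIntegrable hR.le
  have hcircC : CircleIntegrable (fun z => ((f z).re : ℂ)) 0 R :=
    (continuous_ofReal.comp_continuousOn hus).circleIntegrable hR.le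
  refine ⟨_, differentiableOn_circleAverage_herglotzRieszKernel_smul hcircC, ?_⟩
  intro w hw
  rw [re_circleAverage_herglotzRieszKernel_smul hcirc hw.1]
  set k : ℂ → ℝ := Complex.re ∘ herglotzRieszKernel 0 w with hk
  have hkc : ContinuousOn k (sphere (0:ℂ) R) := by
    have := continuousOn_herglotzRieszKernel_sphere hw.1
    rw [abs_of_pos hR] at this
    exact continuous_re.comp_continuousOn this
  have hwn : ‖w‖ < R := by simpa using hw.1
  set K : ℝ := (R + ‖w‖) / (R - ‖w‖) with hKdef
  have hK0 : 0 < K := div_pos (by positivity) (by linarith)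
  have hkK : ∀ z ∈ sphere (0:ℂ) R, |k z| ≤ K := by
    intro z hz
    have h1 := re_herglotzRieszKernel_le hz hw.1
    have h2 := le_re_herglotzRieszKernel hz hw.1
    have h3 : 0 ≤ (R - ‖w - 0‖) / (R + ‖w - 0‖) := by
      rw [sub_zero]; exact div_nonneg (by linarith) (by positivity)
    rw [hk, Function.comp_apply, herglotzRieszKernel_def, abs_of_nonneg (h3.trans h2)]
    simpa [hKdef] using h1
  refine eq_of_abs_sub_le_all ?_
  intro ε hε
  have hε' : 0 < ε / (1 + K) := by positivity
  obtain ⟨p, hp, hpu⟩ := approx_re hR hus hε'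
  have hpois : Real.circleAverage (k • (fun z => (p z).re)) 0 R = (p w).re := by
    have h1 := DiffContOnCl.circleAverage_re_herglotzRieszKernel_smul (c := 0) (R := R) (w := w)
      (hp.diffContOnCl) hw.1
    rw [← h1]
    have := Complex.reCLM.circleAverage_comp_comm (c := 0) (R := R)
      (f := (Complex.re ∘ herglotzRieszKernel 0 w) • p) ?_
    · rw [reCLM_apply] at this
      rw [← this]
      congr 1
      ext z
      simp [hk]
    · exact (hkc.smul hp.continuous.continuousOn).circleIntegrable hR.le
  have hpr : ContinuousOn (fun z => (p z).re) (sphere (0:ℂ) R) :=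
    (continuous_re.comp hp.continuous).continuousOn
  have h1 : |Real.circleAverage (k • (fun z => (f z).re)) 0 R - (p w).re| ≤ K * (ε / (1 + K)) := by
    rw [← hpois, ← Real.circleAverage_sub ((hkc.smul hus).circleIntegrable hR.le)
      ((hkc.smul hpr).circleIntegrable hR.le)]
    refine Real.abs_circleAverage_le_circleAverage_abs.trans ?_
    refine Real.circleAverage_mono_on_of_le_circle ?_ ?_
    · exact (((hkc.smul hus).sub (hkc.smul hpr)).abs).circleIntegrable hR.le
    · intro z hz
      rw [abs_of_pos hR] at hz
      have : (|k • (fun z => (f z).re) - k • (fun z => (p z).re)|) z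
          = |k z| * |(f z).re - (p z).re| := by
        simp [← abs_mul, mul_sub]
      rw [this]
      exact mul_le_mul (hkK z hz) (hpu z hz) (abs_nonneg _) hK0.le
  have hfc : DiffContOnCl ℂ f (radoDom f R) :=
    ⟨fun w hw => (hd w hw.1 hw.2).differentiableWithinAt, hf.mono radoDom_closure⟩
  have h2 : (f w).re - (p w).re ≤ ε / (1 + K) := by
    have := rado_max_re (h := fun z => f z - p z) (M := ε / (1 + K)) hf hd
      (hfc.sub hp.diffContOnCl) ?_ w hw
    · simpa using this
    · intro z hz
      simpa using (abs_le.1 (hpu z hz)).2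
  have h3 : (p w).re - (f w).re ≤ ε / (1 + K) := by
    have := rado_max_re (h := fun z => p z - f z) (M := ε / (1 + K)) hf hd
      (hp.diffContOnCl.sub hfc) ?_ w hw
    · simpa using this
    · intro z hz
      have := (abs_le.1 (hpu z hz)).1
      simp only [sub_re]
      linarith
  have h4 : ε / (1 + K) + K * (ε / (1 + K)) = ε := by field_simp
  rw [abs_le] at h1 ⊢
  constructor <;> linarith [h1.1, h1.2]

lemma rado_ball {f : ℂ → ℂ} {R : ℝ} (hR : 0 < R) (hf : ContinuousOn f (closedBall 0 R))
    (hd : ∀ z ∈ ball (0:ℂ) R, f z ≠ 0 → DifferentiableAt ℂ f z)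
    (h0 : (0:ℂ) ∈ closure (radoDom f R)) : DifferentiableAt ℂ f 0 := by
  obtain ⟨P, hP, hPf⟩ := rado_re hR hf hd
  have hfI : radoDom (fun z => -I * f z) R = radoDom f R := by
    ext z; simp [radoDom]
  obtain ⟨Q, hQ, hQf⟩ := rado_re (f := fun z => -I * f z) hR (continuousOn_const.mul hf)
    (fun z hz hne => (hd z hz (by simpa using hne)).const_mul _)
  rw [hfI] at hQf
  obtain ⟨a, ha⟩ : (radoDom f R).Nonempty := closure_nonempty_iff.1 ⟨0, h0⟩
  obtain ⟨δ, hδ, hsub⟩ := Metric.isOpen_iff.1 (radoDom_isOpen hf) a ha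
  have hsubR : ball a δ ⊆ ball 0 R := hsub.trans inter_subset_left
  have hfd : DifferentiableOn ℂ f (ball a δ) := fun z hz =>
    (hd z (hsub hz).1 (hsub hz).2).differentiableWithinAt
  have hpc : IsConnected (ball a δ) := (convex_ball a δ).isConnected ⟨a, mem_ball_self hδ⟩
  obtain ⟨k₁, hk₁⟩ := AnalyticOnNhd.eq_const_of_re_eq_const (f := fun z => f z - P z) (c₀ := 0)
    ((hfd.sub (hP.mono hsubR)).analyticOnNhd isOpen_ball)
    (fun z hz => by simp [hPf z (hsub hz)]) isOpen_ball hpc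
  obtain ⟨k₂, hk₂⟩ := AnalyticOnNhd.eq_const_of_re_eq_const (f := fun z => -I * f z - Q z) (c₀ := 0)
    (((hfd.const_mul _).sub (hQ.mono hsubR)).analyticOnNhd isOpen_ball)
    (fun z hz => by rw [sub_re, hQf z (hsub hz), sub_self]) isOpen_ball hpc
  have hQP : ∀ z ∈ ball (0:ℂ) R, Q z = -I * P z + (-I * k₁ - k₂) := by
    refine (hQ.analyticOnNhd isOpen_ball).eqOn_of_preconnected_of_eventuallyEq
      (((hP.const_mul (-I)).add_const _).analyticOnNhd isOpen_ball)
      (convex_ball 0 R).isPreconnected (hsubR (mem_ball_self hδ)) ?_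
    filter_upwards [ball_mem_nhds a hδ] with z hz
    linear_combination (-I) * hk₁ z hz - hk₂ z hz
  set k : ℂ := -I * k₁ - k₂
  have hG : ∀ z ∈ radoDom f R, f z = P z + I * k.re := by
    intro z hz
    have h1 := hPf z hz
    have h2 := hQf z hz
    rw [hQP z hz.1] at h2
    apply Complex.ext
    · simp [h1]
    · simpa using h2
  have hnhds : f =ᶠ[𝓝 0] fun z => P z + I * k.re := by
    filter_upwards [ball_mem_nhds (0:ℂ) (half_pos hR)] with z hz
    have hzc := rado_dense hR hf hd h0 hz
    have hzR : z ∈ ball (0:ℂ) R := ball_subset_ball (by linarith) hz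
    have hNe : (𝓝[radoDom f R] z).NeBot := mem_closure_iff_nhdsWithin_neBot.1 hzc
    have hfz : ContinuousAt f z := hf.continuousAt (closedBall_mem_nhds_of_mem hzR)
    have hPz : ContinuousAt (fun z => P z + I * k.re) z :=
      ((hP.differentiableAt (isOpen_ball.mem_nhds hzR)).continuousAt).add continuousAt_const
    refine tendsto_nhds_unique (f := f) (l := 𝓝[radoDom f R] z)
      (hfz.tendsto.mono_left nhdsWithin_le_nhds)
      ((hPz.tendsto.mono_left nhdsWithin_le_nhds).congr' ?_)
    filter_upwards [self_mem_nhdsWithin] with y hy using (hG y hy).symm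
  refine DifferentiableAt.congr_of_eventuallyEq ?_ hnhds
  exact (hP.differentiableAt (isOpen_ball.mem_nhds (mem_ball_self hR))).add_const _

/-- Radó's theorem in one variable, at the origin. -/
lemma rado_one {f : ℂ → ℂ} (hf : ∀ᶠ z in 𝓝 (0:ℂ), ContinuousAt f z ∧
    (f z ≠ 0 → DifferentiableAt ℂ f z)) : DifferentiableAt ℂ f 0 := by
  obtain ⟨R, hR, h⟩ := Metric.nhds_basis_closedBall.eventually_iff.1 hf
  by_cases h0 : (0:ℂ) ∈ closure (radoDom f R)
  · exact rado_ball hR (fun z hz => (h hz).1.continuousWithinAt)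
      (fun z hz => (h (ball_subset_closedBall hz)).2) h0
  · refine (differentiableAt_const (0:ℂ)).congr_of_eventuallyEq ?_
    filter_upwards [isClosed_closure.isOpen_compl.mem_nhds h0, ball_mem_nhds 0 hR] with z hz hzR
    by_contra hne
    exact hz (subset_closure ⟨hzR, hne⟩)

lemma taylor_one {φ : ℂ → ℂ} {ρ : ℝ} (hρ : 0 < ρ) (hφ : DifferentiableOn ℂ φ (ball 0 ρ))
    (hb : ∀ t ∈ ball (0:ℂ) ρ, ‖φ t - φ 0‖ ≤ 2) {t : ℂ} (ht : t ∈ ball (0:ℂ) ρ) :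
    ‖φ t - φ 0 - t * deriv φ 0‖ ≤ 4 * (‖t‖ / ρ) ^ 2 := by
  have hL : ‖deriv φ 0‖ ≤ 2 / ρ := norm_deriv_le_div_of_mapsTo_ball hφ
    (fun t ht => by simpa [dist_eq_norm] using hb t ht) hρ
  have h0 : DifferentiableAt ℂ φ 0 := hφ.differentiableAt (ball_mem_nhds 0 hρ)
  have := Complex.dist_le_mul_div_pow_of_mapsTo_ball_of_isLittleO (f := fun t => φ t - t * deriv φ 0) (c := 0) (z := t) (R₁ := ρ) (R₂ := 4)
    (n := 1) (hφ.sub (by fun_prop)) ?_ ?_ ht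
  · simp only [zero_mul, sub_zero, dist_eq_norm] at this
    rwa [sub_right_comm]
  · intro s hs
    have hs' : ‖s‖ < ρ := by simpa using hs
    rw [mem_closedBall, dist_eq_norm]
    have e : φ s - s * deriv φ 0 - (φ 0 - 0 * deriv φ 0) = (φ s - φ 0) - s * deriv φ 0 := by ring
    rw [e]
    have h1 : ‖s * deriv φ 0‖ ≤ 2 := by
      rw [norm_mul]
      calc ‖s‖ * ‖deriv φ 0‖ ≤ ρ * (2 / ρ) := by gcongr
        _ = 2 := by field_simp
    linarith [norm_sub_le (φ s - φ 0) (s * deriv φ 0), hb s hs]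
  · have := (hasDerivAt_iff_isLittleO.1 h0.hasDerivAt)
    simp only [pow_one]
    refine (this.congr_left fun s => ?_).norm_right
    simp; ring

lemma gateaux {E : Type*} [NormedAddCommGroup E] [NormedSpace ℂ E] [FiniteDimensional ℂ E]
    {U : Set E} (hU : IsOpen U) {g : E → ℂ} (hg : ContinuousOn g U)
    (hl : ∀ z ∈ U, ∀ v : E, DifferentiableAt ℂ (fun t : ℂ => g (z + t • v)) 0) :
    ∀ z ∈ U, DifferentiableAt ℂ g z := by
  intro z₀ hz₀
  have hgc : ∀ z ∈ U, ContinuousAt g z := fun z hz => hg.continuousAt (hU.mem_nhds hz)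
  obtain ⟨r', hr', hr⟩ := Metric.nhds_basis_ball.eventually_iff.1
    ((hU.eventually_mem hz₀).and ((hgc z₀ hz₀).eventually (Metric.ball_mem_nhds _ one_pos)))
  obtain ⟨r, rfl⟩ : ∃ r, r' = 2 * r := ⟨r' / 2, by ring⟩
  have hr0 : 0 < r := by linarith
  let L : E → E → ℂ := fun x v => deriv (fun t : ℂ => g (x + t • v)) 0
  have hLs : ∀ x v (c : ℂ), L x (c • v) = c * L x v := by
    intro x v c
    have := deriv_comp_mul_left c (fun t : ℂ => g (x + t • v)) 0
    simp only [L]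
    simpa [smul_smul, mul_comm] using this
  have hin : ∀ x ∈ ball z₀ r, ∀ v, ‖v‖ < r → x + v ∈ ball z₀ (2 * r) := by
    intro x hx v hv
    rw [mem_ball, dist_eq_norm] at *
    have : x + v - z₀ = (x - z₀) + v := by abel
    rw [this]
    linarith [norm_add_le (x - z₀) v]
  have est : ∀ x ∈ ball z₀ r, ∀ v, ‖v‖ < r → ‖g (x + v) - g x - L x v‖ ≤ 4 / r ^ 2 * ‖v‖ ^ 2 := by
    intro x hx v hv
    rcases eq_or_ne v 0 with rfl | hv0
    · have : L x 0 = 0 := by simpa using hLs x 0 0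
      simp [this]
    have hvn : 0 < ‖v‖ := norm_pos_iff.2 hv0
    have hsm : ∀ t ∈ ball (0:ℂ) (r / ‖v‖), ‖t • v‖ < r := by
      intro t ht
      rw [mem_ball_zero_iff, lt_div_iff₀ hvn] at ht
      rwa [norm_smul]
    have := taylor_one (φ := fun t : ℂ => g (x + t • v)) (ρ := r / ‖v‖) (by positivity) ?_ ?_
      (t := 1) (by simpa [one_lt_div hvn] using hv)
    · simp only [one_smul, zero_smul, add_zero, one_mul, norm_one] at this
      refine this.trans (le_of_eq ?_)
      field_simp
    · intro t ht
      have hm := (hr (hin x hx _ (hsm t ht))).1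
      have h1 := hl _ hm v
      have h2 : DifferentiableAt ℂ (fun s : ℂ => g (x + s • v)) t := by
        have h3 : DifferentiableAt ℂ (fun s : ℂ => g (x + t • v + (s - t) • v)) t := by
          have h4 : DifferentiableAt ℂ (fun s : ℂ => s - t) t := by fun_prop
          exact DifferentiableAt.comp t (g := fun t' : ℂ => g (x + t • v + t' • v))
            (f := fun s : ℂ => s - t) (by simpa using h1) h4
        refine h3.congr_of_eventuallyEq (Eventually.of_forall fun s => ?_)
        simp [sub_smul]
      exact h2.differentiableWithinAt
    · intro t ht
      have h1 := (hr (hin x hx _ (hsm t ht))).2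
      have h2 := (hr (hin x hx 0 (by simpa using hr0))).2
      rw [dist_eq_norm] at h1 h2
      have := norm_sub_le (g (x + t • v) - g z₀) (g (x + 0) - g z₀)
      rw [sub_sub_sub_cancel_right] at this
      simp only [zero_smul]
      linarith
  have est' : ∀ v : E, ∀ᶠ t in 𝓝 (0:ℂ), ∀ x ∈ ball z₀ r,
      ‖g (x + t • v) - g x - t * L x v‖ ≤ (4 / r ^ 2 * ‖v‖ ^ 2) * ‖t‖ ^ 2 := by
    intro v
    have : ∀ᶠ t in 𝓝 (0:ℂ), ‖t • v‖ < r := by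
      have hc : ContinuousAt (fun t : ℂ => ‖t • v‖) 0 := by fun_prop
      exact hc.eventually (gt_mem_nhds (by simpa using hr0))
    filter_upwards [this] with t ht x hx
    have := est x hx _ ht
    rw [hLs, norm_smul] at this
    refine this.trans (le_of_eq (by ring))
  have est2 : ∀ v : E, ∃ C : ℝ, 0 ≤ C ∧ ∀ᶠ t in 𝓝[≠] (0:ℂ), ∀ x ∈ ball z₀ r,
      ‖(g (x + t • v) - g x) / t - L x v‖ ≤ C * ‖t‖ := by
    intro v
    refine ⟨4 / r ^ 2 * ‖v‖ ^ 2, by positivity, ?_⟩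
    filter_upwards [(est' v).filter_mono nhdsWithin_le_nhds, self_mem_nhdsWithin] with t ht ht0 x hx
    have ht0' : t ≠ 0 := ht0
    have htn : 0 < ‖t‖ := norm_pos_iff.2 ht0'
    have := ht x hx
    have e : (g (x + t • v) - g x) / t - L x v = (g (x + t • v) - g x - t * L x v) / t := by
      field_simp
    rw [e, norm_div, div_le_iff₀ htn]
    linarith
  have hLc : ∀ v, ContinuousAt (fun x => L x v) z₀ := by
    intro v
    obtain ⟨C, hC, hv⟩ := est2 v
    refine continuousAt_of_locally_uniform_approx_of_continuousAt fun u hu => ?_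
    obtain ⟨ε, hε, hεu⟩ := Metric.mem_uniformity_dist.1 hu
    have hsm : ∀ᶠ t in 𝓝[≠] (0:ℂ), C * ‖t‖ < ε := by
      have hc : ContinuousAt (fun t : ℂ => C * ‖t‖) 0 := by fun_prop
      exact (hc.eventually (gt_mem_nhds (by simpa using hε))).filter_mono nhdsWithin_le_nhds
    have hmem : ∀ᶠ t in 𝓝[≠] (0:ℂ), z₀ + t • v ∈ U := by
      have hc : ContinuousAt (fun t : ℂ => z₀ + t • v) 0 := by fun_prop
      exact (hc.eventually (hU.mem_nhds (by simpa using hz₀))).filter_mono nhdsWithin_le_nhds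
    obtain ⟨t, ht1, ht2, ht3⟩ := (hv.and (hsm.and hmem)).exists
    refine ⟨ball z₀ r, ball_mem_nhds _ hr0, fun x => (g (x + t • v) - g x) / t, ?_, fun y hy => ?_⟩
    · have h1 : ContinuousAt (fun x => g (x + t • v)) z₀ :=
        ContinuousAt.comp (f := fun x => x + t • v) (hgc _ ht3) (by fun_prop)
      exact (h1.sub (hgc _ hz₀)).div_const _
    · apply hεu
      rw [dist_comm, dist_eq_norm]
      exact (ht1 y hy).trans_lt ht2
  have hz₀r : z₀ ∈ ball z₀ r := mem_ball_self hr0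
  have hq : ∀ v, Tendsto (fun t : ℂ => (g (z₀ + t • v) - g z₀) / t) (𝓝[≠] 0) (𝓝 (L z₀ v)) := by
    intro v
    obtain ⟨C, hC, hv⟩ := est2 v
    rw [tendsto_iff_norm_sub_tendsto_zero]
    refine squeeze_zero' (Eventually.of_forall fun _ => norm_nonneg _)
      (hv.mono fun t ht => ht z₀ hz₀r) ?_
    have hc : ContinuousAt (fun t : ℂ => C * ‖t‖) 0 := by fun_prop
    simpa using hc.tendsto.mono_left nhdsWithin_le_nhds
  have hLa : ∀ v w, L z₀ (v + w) = L z₀ v + L z₀ w := by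
    intro v w
    obtain ⟨C, hC, hv⟩ := est2 v
    have hcw : Tendsto (fun t : ℂ => z₀ + t • w) (𝓝[≠] 0) (𝓝 z₀) := by
      have hc : ContinuousAt (fun t : ℂ => z₀ + t • w) 0 := by fun_prop
      simpa using hc.tendsto.mono_left (nhdsWithin_le_nhds (s := {0}ᶜ))
    have h1 : Tendsto (fun t : ℂ => L (z₀ + t • w) v) (𝓝[≠] 0) (𝓝 (L z₀ v)) :=
      (hLc v).tendsto.comp hcw
    have h2 : Tendsto (fun t : ℂ => (g (z₀ + t • w + t • v) - g (z₀ + t • w)) / t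
        - L (z₀ + t • w) v) (𝓝[≠] 0) (𝓝 0) := by
      rw [tendsto_zero_iff_norm_tendsto_zero]
      refine squeeze_zero' (Eventually.of_forall fun _ => norm_nonneg _)
        (g := fun t => C * ‖t‖) ?_ ?_
      · filter_upwards [hv, hcw.eventually (ball_mem_nhds z₀ hr0)] with t ht ht' using ht _ ht'
      · have hc : ContinuousAt (fun t : ℂ => C * ‖t‖) 0 := by fun_prop
        simpa using hc.tendsto.mono_left nhdsWithin_le_nhds
    have h3 := (h2.add h1).add (hq w)
    rw [zero_add] at h3
    refine tendsto_nhds_unique (hq (v + w)) (h3.congr fun t => ?_)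
    have : z₀ + t • (v + w) = z₀ + t • w + t • v := by rw [smul_add]; abel
    rw [this]
    ring
  let Λ : E →ₗ[ℂ] ℂ :=
    { toFun := L z₀, map_add' := hLa, map_smul' := fun c v => by simp [hLs] }
  refine HasFDerivAt.differentiableAt (f' := LinearMap.toContinuousLinearMap Λ) ?_
  rw [hasFDerivAt_iff_isLittleO_nhds_zero]
  refine Asymptotics.IsBigO.trans_isLittleO (g := fun h : E => ‖h‖ ^ 2) ?_
    (Asymptotics.isLittleO_norm_pow_id one_lt_two)
  refine Asymptotics.IsBigO.of_bound (4 / r ^ 2) ?_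
  filter_upwards [ball_mem_nhds (0:E) hr0] with v hv
  rw [Real.norm_of_nonneg (by positivity)]
  exact est z₀ hz₀r v (by simpa using hv)

/-- Radó's theorem in several variables: if `g` is continuous on an open set
`U ⊆ ℂⁿ` and holomorphic at every point of `U` outside the zero set of `g`,
then `g` is holomorphic on all of `U`. -/
theorem rado_several_variables (n : ℕ) (U : Set (Fin n → ℂ)) (hU : IsOpen U)
    (g : (Fin n → ℂ) → ℂ) (hcont : ContinuousOn g U)
    (hdiff : ∀ z ∈ U \ g ⁻¹' {0}, DifferentiableAt ℂ g z) :
    ∀ z ∈ U, DifferentiableAt ℂ g z := by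
  refine gateaux hU hcont fun z hz v => rado_one ?_
  have hc : Continuous (fun t : ℂ => z + t • v) := by fun_prop
  filter_upwards [hc.continuousAt.eventually (hU.mem_nhds (by simpa using hz))] with t ht
  refine ⟨ContinuousAt.comp (f := fun t : ℂ => z + t • v) (hcont.continuousAt (hU.mem_nhds ht))
    hc.continuousAt, fun hne => ?_⟩
  exact DifferentiableAt.comp t (f := fun t : ℂ => z + t • v) (hdiff _ ⟨ht, hne⟩) (by fun_prop)
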